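/- Let d ≥ 2, let Φ = (1/√d) Σ_i e_i ⊗ e_i be the maximally entangled state in ℂ^d ⊗ ℂ^d, let a, b be unit vectors in ℂ^d, and let (U_a, U_b) be distributed according to the product Haar measure on U(d) × U(d). Then for every t ∈ [0, 1/d], the probability that |⟨a ⊗ b, (U_a ⊗ U_b)Φ⟩|² ≤ t equals 1 − (1 − dt)^{d−1}; equivalently, the fidelity of a Haar-random locally rotated maximally entangled state with a fixed product state has probability density f ↦ d(d−1)(1−df)^{d−2} on [0, 1/d] and density 0 on (1/d, 1]. -/

import Mathlib

open MeasureTheory Matrix Finset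
open scoped ComplexConjugate

noncomputable section

/-- Borel measurable structure on the unitary group `U(d)`. -/
instance (n : Type*) [Fintype n] [DecidableEq n] :
    MeasurableSpace (Matrix.unitaryGroup n ℂ) := borel _

instance (n : Type*) [Fintype n] [DecidableEq n] :
    BorelSpace (Matrix.unitaryGroup n ℂ) := ⟨rfl⟩

/-- The Kronecker-product action of a pair of `d × d` matrices on a bipartite vector in
`ℂ^d ⊗ ℂ^d`, identified with `Fin d × Fin d → ℂ`. -/
def kronAct {d : ℕ} (Ua Ub : Matrix (Fin d) (Fin d) ℂ) (ψ : Fin d × Fin d → ℂ) :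
    Fin d × Fin d → ℂ :=
  fun p => ∑ q : Fin d × Fin d, Ua p.1 q.1 * Ub p.2 q.2 * ψ q

/-- The standard Hermitian inner product on `ℂ^d ⊗ ℂ^d`. -/
def bipInner {d : ℕ} (x y : Fin d × Fin d → ℂ) : ℂ :=
  ∑ p : Fin d × Fin d, conj (x p) * y p

/-- The maximally entangled state `Φ = (1/√d) ∑ i, e i ⊗ e i` in `ℂ^d ⊗ ℂ^d`. -/
def maxEnt (d : ℕ) : Fin d × Fin d → ℂ :=
  fun p => if p.1 = p.2 then (1 / Real.sqrt d : ℂ) else 0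

/-!
Transporting both unitaries to one side of the maximally entangled state turns the amplitude
`⟨a ⊗ b, (U ⊗ V)Φ⟩` into `⟨a, U Vᵀ b̄⟩ / √d`, where `v = Vᵀ b̄` is a unit vector. So it suffices to
find the law of `|⟨a, U v⟩|²` for fixed `v` and invariant `U`. By left invariance, the probability
that `|⟨x, U v⟩|² > s ‖x‖²` does not depend on `x ≠ 0`; averaging over a Gaussian `x`, whose law is
unitarily invariant, identifies it with the Gaussian proportion of the cone
`{x | s ‖x‖² < |⟨x, v⟩|²}`. Splitting `x` along `v` and `vᗮ` evaluates this proportion to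
`(1 - s) ^ (d - 1)`, and differentiating the distribution function gives the density.
-/

open Real Module InnerProductSpace

lemma measurePreserving_withDensity_comp {α β : Type*} [MeasurableSpace α] [MeasurableSpace β]
    {μ : Measure α} {ν : Measure β} {φ : α → β} (hφ : MeasurePreserving φ μ ν)
    {f : β → ENNReal} (hf : Measurable f) :
    MeasurePreserving φ (μ.withDensity (f ∘ φ)) (ν.withDensity f) := by
  refine ⟨hφ.measurable, Measure.ext fun s hs ↦ ?_⟩
  rw [Measure.map_apply hφ.measurable hs, withDensity_apply _ (hφ.measurable hs),
    withDensity_apply _ hs, ← hφ.setLIntegral_comp_preimage hs hf]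
  rfl

/-- The standard Gaussian measure of a Euclidean space, without its normalizing constant
`π ^ (-dim / 2)`: only ratios of Gaussian volumes matter here. -/
def gaussianWeight (E : Type*) [NormedAddCommGroup E] [MeasureSpace E] : Measure E :=
  volume.withDensity fun x ↦ ENNReal.ofReal (exp (-‖x‖ ^ 2))

lemma integral_Ioi_two_mul_exp_neg_sq {r : ℝ} (hr : 0 ≤ r) :
    ∫ y in Set.Ioi r, 2 * y * exp (-y ^ 2) = exp (-r ^ 2) := by
  have hderiv (y : ℝ) : HasDerivAt (fun y ↦ -exp (-y ^ 2)) (2 * y * exp (-y ^ 2)) y := by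
    refine ((hasDerivAt_pow 2 y).fun_neg.exp.fun_neg).congr_deriv ?_
    norm_num
    ring
  have hlim : Filter.Tendsto (fun y : ℝ ↦ -exp (-y ^ 2)) Filter.atTop (nhds (-0)) :=
    (tendsto_exp_neg_atTop_nhds_zero.comp (Filter.tendsto_pow_atTop two_ne_zero)).neg
  rw [integral_Ioi_of_hasDerivAt_of_nonneg (hderiv r).continuousAt.continuousWithinAt
    (fun y _ ↦ hderiv y) (fun y hy ↦ ?_) hlim]
  · simp
  · have : 0 < y := hr.trans_lt hy
    positivity

section Gaussian

variable {V W : Type*} [NormedAddCommGroup V] [InnerProductSpace ℝ V] [FiniteDimensional ℝ V]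
  [MeasurableSpace V] [BorelSpace V] [NormedAddCommGroup W] [InnerProductSpace ℝ W]
  [FiniteDimensional ℝ W] [MeasurableSpace W] [BorelSpace W]

lemma integrable_exp_neg_mul_sq_norm {b : ℝ} (hb : 0 < b) :
    Integrable fun x : V ↦ exp (-b * ‖x‖ ^ 2) := by
  refine not_imp_comm.1 integral_undef ?_
  rw [GaussianFourier.integral_rexp_neg_mul_sq_norm hb]
  positivity

lemma lintegral_exp_neg_mul_sq_norm {b : ℝ} (hb : 0 < b) :
    ∫⁻ x : V, ENNReal.ofReal (exp (-b * ‖x‖ ^ 2)) =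
      ENNReal.ofReal ((π / b) ^ (finrank ℝ V / 2 : ℝ)) := by
  rw [← GaussianFourier.integral_rexp_neg_mul_sq_norm hb, ofReal_integral_eq_lintegral_ofReal
    (integrable_exp_neg_mul_sq_norm hb) (.of_forall fun x ↦ (exp_pos _).le)]

lemma gaussianWeight_univ :
    gaussianWeight V Set.univ = ENNReal.ofReal (π ^ (finrank ℝ V / 2 : ℝ)) := by
  simpa [gaussianWeight] using lintegral_exp_neg_mul_sq_norm (V := V) one_pos

instance : IsFiniteMeasure (gaussianWeight V) :=
  ⟨gaussianWeight_univ.trans_lt ENNReal.ofReal_lt_top⟩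

lemma gaussianWeight_singleton [Nontrivial V] (x : V) : gaussianWeight V {x} = 0 :=
  withDensity_absolutelyContinuous _ _ (measure_singleton x)

lemma measurePreserving_gaussianWeight (e : V ≃ₗᵢ[ℝ] W) :
    MeasurePreserving e (gaussianWeight V) (gaussianWeight W) := by
  simpa [gaussianWeight, Function.comp_def] using
    measurePreserving_withDensity_comp e.measurePreserving
      (f := fun x ↦ ENNReal.ofReal (exp (-‖x‖ ^ 2))) (by fun_prop)

lemma measurePreserving_ofLp_gaussianWeight :
    MeasurePreserving (WithLp.ofLp (p := 2)) (gaussianWeight (WithLp 2 (V × W)))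
      ((gaussianWeight V).prod (gaussianWeight W)) := by
  have hdensity : (fun x : WithLp 2 (V × W) ↦ ENNReal.ofReal (exp (-‖x‖ ^ 2))) =
      (fun p : V × W ↦ ENNReal.ofReal (exp (-‖p.1‖ ^ 2)) * ENNReal.ofReal (exp (-‖p.2‖ ^ 2))) ∘
        WithLp.ofLp := by
    funext x
    simp only [Function.comp_apply, WithLp.prod_norm_sq_eq_of_L2, neg_add, exp_add,
      ENNReal.ofReal_mul (exp_pos _).le]
    rfl
  rw [gaussianWeight, gaussianWeight, gaussianWeight, hdensity,
    prod_withDensity (by fun_prop) (by fun_prop), ← Measure.volume_eq_prod]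
  exact measurePreserving_withDensity_comp (WithLp.volume_preserving_ofLp V W) (by fun_prop)

lemma gaussianWeight_lt_norm_sq (hV : finrank ℝ V = 2) {r : ℝ} (hr : 0 ≤ r) :
    gaussianWeight V {x | r < ‖x‖ ^ 2} = ENNReal.ofReal (π * exp (-r)) := by
  have : Nontrivial V := nontrivial_of_finrank_pos (by lia : 0 < finrank ℝ V)
  have hball : volume.real (Metric.ball (0 : V) 1) = π := by
    simp [Measure.real, volume_ball_of_dim_even (k := 1) hV, pi_nonneg]
  have hmeas : MeasurableSet {x : V | r < ‖x‖ ^ 2} := measurableSet_lt (by fun_prop) (by fun_prop)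
  have hint : Integrable fun x : V ↦ exp (-‖x‖ ^ 2) := by
    simpa using integrable_exp_neg_mul_sq_norm (V := V) one_pos
  rw [gaussianWeight, withDensity_apply _ hmeas, ← ofReal_integral_eq_lintegral_ofReal
    hint.integrableOn (.of_forall fun x ↦ (exp_pos _).le), ← integral_indicator hmeas]
  congr 1
  calc ∫ x, {x : V | r < ‖x‖ ^ 2}.indicator (fun x ↦ exp (-‖x‖ ^ 2)) x
      = ∫ x : V, (Set.Ioi √r).indicator (fun y ↦ exp (-y ^ 2)) ‖x‖ := by
        simp only [Set.indicator, Set.mem_ofPred_eq, Set.mem_Ioi, sqrt_lt hr (norm_nonneg _)]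
    _ = π * ∫ y in Set.Ioi 0, (Set.Ioi √r).indicator (fun y ↦ 2 * y * exp (-y ^ 2)) y := by
        rw [integral_fun_norm_addHaar volume, hball, hV]
        simp only [nsmul_eq_mul, smul_eq_mul, ← integral_const_mul, Set.indicator, mul_ite,
          mul_zero]
        congr! 3
        norm_num
        ring
    _ = π * exp (-r) := by
        rw [setIntegral_indicator measurableSet_Ioi,
          Set.inter_eq_right.2 (Set.Ioi_subset_Ioi (sqrt_nonneg r)),
          integral_Ioi_two_mul_exp_neg_sq (sqrt_nonneg r), sq_sqrt hr]

lemma prod_gaussianWeight_mul_lt_norm_sq (hV : finrank ℝ V = 2) {s : ℝ} (hs₀ : 0 ≤ s)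
    (hs₁ : s < 1) :
    (gaussianWeight V).prod (gaussianWeight W)
        {p | s * (‖p.1‖ ^ 2 + ‖p.2‖ ^ 2) < ‖p.1‖ ^ 2} =
      ENNReal.ofReal ((1 - s) ^ (finrank ℝ W / 2 : ℝ)) *
        (gaussianWeight V).prod (gaussianWeight W) Set.univ := by
  have hs : 0 < 1 - s := sub_pos.2 hs₁
  have hmeas : MeasurableSet {p : V × W | s * (‖p.1‖ ^ 2 + ‖p.2‖ ^ 2) < ‖p.1‖ ^ 2} :=
    measurableSet_lt (by fun_prop) (by fun_prop)
  have hslice (y : W) : gaussianWeight V {x | s * (‖x‖ ^ 2 + ‖y‖ ^ 2) < ‖x‖ ^ 2} =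
      ENNReal.ofReal (π * exp (-(s / (1 - s) * ‖y‖ ^ 2))) := by
    rw [← gaussianWeight_lt_norm_sq hV (by positivity)]
    congr! 3 with x
    rw [div_mul_eq_mul_div, div_lt_iff₀ hs]
    constructor <;> intro h <;> linarith
  have hexp (y : W) : exp (-‖y‖ ^ 2) * (π * exp (-(s / (1 - s) * ‖y‖ ^ 2))) =
      π * exp (-(1 / (1 - s)) * ‖y‖ ^ 2) := by
    rw [mul_left_comm, ← exp_add]
    congr 2
    field_simp
    ring
  calc _ = ∫⁻ y, ENNReal.ofReal (π * exp (-(s / (1 - s) * ‖y‖ ^ 2))) ∂gaussianWeight W := by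
        rw [Measure.prod_apply_symm hmeas]
        exact lintegral_congr hslice
    _ = ∫⁻ y : W, ENNReal.ofReal π * ENNReal.ofReal (exp (-(1 / (1 - s)) * ‖y‖ ^ 2)) := by
        rw [gaussianWeight, lintegral_withDensity_eq_lintegral_mul _ (by fun_prop) (by fun_prop)]
        simp [← ENNReal.ofReal_mul, exp_nonneg, pi_nonneg, hexp]
    _ = _ := by
        rw [lintegral_const_mul _ (by fun_prop), lintegral_exp_neg_mul_sq_norm (by positivity),
          ← Set.univ_prod_univ, Measure.prod_prod, gaussianWeight_univ, gaussianWeight_univ, hV,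
          one_div, div_inv_eq_mul, mul_rpow pi_nonneg hs.le, ENNReal.ofReal_mul (by positivity),
          Nat.cast_ofNat, div_self two_ne_zero, rpow_one]
        ring

end Gaussian

section Complex

lemma norm_orthogonalProjectionOnto_span_singleton {𝕜 F : Type*} [RCLike 𝕜]
    [NormedAddCommGroup F] [InnerProductSpace 𝕜 F] {v : F} (hv : ‖v‖ = 1) (x : F) :
    ‖(𝕜 ∙ v).orthogonalProjectionOnto x‖ = ‖inner 𝕜 x v‖ := by
  rw [Submodule.coe_norm, ← Submodule.starProjection_apply,
    Submodule.starProjection_unit_singleton 𝕜 hv, norm_smul, hv, mul_one, norm_inner_symm]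

attribute [local instance] InnerProductSpace.complexToReal FiniteDimensional.complexToReal

variable {E : Type*} [NormedAddCommGroup E] [InnerProductSpace ℂ E] [FiniteDimensional ℂ E]
  [MeasurableSpace E] [BorelSpace E]

lemma gaussianWeight_mul_norm_sq_lt_norm_inner_sq {v : E} (hv : ‖v‖ = 1) {s : ℝ} (hs₀ : 0 ≤ s)
    (hs₁ : s < 1) :
    gaussianWeight E {x | s * ‖x‖ ^ 2 < ‖inner ℂ x v‖ ^ 2} =
      ENNReal.ofReal ((1 - s) ^ (finrank ℂ E - 1)) * gaussianWeight E Set.univ := by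
  let K := ℂ ∙ v
  have hv₀ : v ≠ 0 := norm_ne_zero_iff.1 (by simp [hv])
  have hK : finrank ℂ K = 1 := finrank_span_singleton hv₀
  have hKperp : finrank ℂ Kᗮ = finrank ℂ E - 1 := by
    have := K.finrank_add_finrank_orthogonal
    lia
  let split : E ≃ₗᵢ[ℝ] WithLp 2 (K × Kᗮ) :=
    ⟨K.orthogonalDecomposition.toLinearEquiv.restrictScalars ℝ,
      K.orthogonalDecomposition.norm_map⟩
  have hsplit : MeasurePreserving (WithLp.ofLp ∘ split) (gaussianWeight E)
      ((gaussianWeight K).prod (gaussianWeight Kᗮ)) :=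
    measurePreserving_ofLp_gaussianWeight.comp (measurePreserving_gaussianWeight split)
  have hset : {x | s * ‖x‖ ^ 2 < ‖inner ℂ x v‖ ^ 2} =
      WithLp.ofLp ∘ split ⁻¹' {p | s * (‖p.1‖ ^ 2 + ‖p.2‖ ^ 2) < ‖p.1‖ ^ 2} := by
    ext x
    have hx : WithLp.ofLp (split x) =
        (K.orthogonalProjectionOnto x, Kᗮ.orthogonalProjectionOnto x) :=
      congrArg WithLp.ofLp (K.orthogonalDecomposition_apply x)
    rw [Set.mem_ofPred_eq, Submodule.norm_sq_eq_add_norm_sq_projection x K,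
      ← norm_orthogonalProjectionOnto_span_singleton hv, Set.mem_preimage, Function.comp_apply, hx,
      Set.mem_ofPred_eq]
  have hmeas : MeasurableSet {p : K × Kᗮ | s * (‖p.1‖ ^ 2 + ‖p.2‖ ^ 2) < ‖p.1‖ ^ 2} :=
    measurableSet_lt (by fun_prop) (by fun_prop)
  calc gaussianWeight E {x | s * ‖x‖ ^ 2 < ‖inner ℂ x v‖ ^ 2}
      = (gaussianWeight K).prod (gaussianWeight Kᗮ)
          {p | s * (‖p.1‖ ^ 2 + ‖p.2‖ ^ 2) < ‖p.1‖ ^ 2} := by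
        rw [hset, hsplit.measure_preimage hmeas.nullMeasurableSet]
    _ = ENNReal.ofReal ((1 - s) ^ (finrank ℝ Kᗮ / 2 : ℝ)) *
          (gaussianWeight K).prod (gaussianWeight Kᗮ) Set.univ :=
        prod_gaussianWeight_mul_lt_norm_sq (by rw [finrank_real_of_complex, hK]) hs₀ hs₁
    _ = ENNReal.ofReal ((1 - s) ^ (finrank ℂ E - 1)) * gaussianWeight E Set.univ := by
        rw [← hsplit.measure_preimage nullMeasurableSet_univ, Set.preimage_univ,
          finrank_real_of_complex, hKperp, Nat.cast_mul, Nat.cast_ofNat,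
          mul_div_cancel_left₀ _ two_ne_zero, rpow_natCast]

end Complex

/-- The unitary representation `ρ` carries any unit vector to any other. -/
def IsTransitiveOnUnitSphere {G 𝕜 E : Type*} [Group G] [RCLike 𝕜] [NormedAddCommGroup E]
    [InnerProductSpace 𝕜 E] (ρ : G →* (E ≃ₗᵢ[𝕜] E)) : Prop :=
  ∀ ⦃u w : E⦄, ‖u‖ = 1 → ‖w‖ = 1 → ∃ g, ρ g u = w

section IsometricAction

variable {G 𝕜 E : Type*} [Group G] [MeasurableSpace G] [MeasurableMul G] [RCLike 𝕜]
  [NormedAddCommGroup E] [InnerProductSpace 𝕜 E] {ρ : G →* (E ≃ₗᵢ[𝕜] E)} {a v : E} {s : ℝ}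
  (μ : Measure G) [μ.IsMulLeftInvariant]

lemma measure_mul_norm_sq_lt_norm_inner_sq (hρ : IsTransitiveOnUnitSphere ρ)
    (ha : ‖a‖ = 1) {x : E} (hx : x ≠ 0) :
    μ {g | s * ‖x‖ ^ 2 < ‖inner 𝕜 x (ρ g v)‖ ^ 2} = μ {g | s < ‖inner 𝕜 a (ρ g v)‖ ^ 2} := by
  have hx' : ‖x‖ ≠ 0 := norm_ne_zero_iff.2 hx
  obtain ⟨h, hh⟩ := hρ ha (norm_smul_inv_norm (𝕜 := 𝕜) hx)
  have hxa : x = (‖x‖ : 𝕜) • ρ h a := by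
    rw [hh, smul_inv_smul₀ (by exact_mod_cast hx')]
  rw [← measure_preimage_mul μ h⁻¹ {g | s < ‖inner 𝕜 a (ρ g v)‖ ^ 2}]
  congr 1
  ext g
  have hinner : ‖inner 𝕜 x (ρ g v)‖ = ‖x‖ * ‖inner 𝕜 a (ρ (h⁻¹ * g) v)‖ := by
    have : inner 𝕜 (ρ h a) (ρ g v) = inner 𝕜 a (ρ (h⁻¹ * g) v) := by
      rw [← (ρ h).inner_map_map a, map_mul, map_inv, LinearIsometryEquiv.coe_mul,
        Function.comp_apply, LinearIsometryEquiv.coe_inv, LinearIsometryEquiv.apply_symm_apply]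
    nth_rw 1 [hxa]
    rw [inner_smul_left, norm_mul, this]
    simp
  simp only [Set.mem_ofPred_eq, Set.mem_preimage, hinner]
  rw [mul_pow, mul_comm, mul_lt_mul_iff_right₀ (by positivity)]

variable [MeasurableSpace E] [BorelSpace E] [SecondCountableTopology E]

/- Both sides compute the `μ.prod γ`-measure of the same set by Fubini: randomizing `a` by `γ`
makes left invariance of `μ` sufficient. -/
lemma measure_mul_norm_sq_lt_norm_inner_sq_eq_mul [IsProbabilityMeasure μ]
    (hρ : IsTransitiveOnUnitSphere ρ) (ha : ‖a‖ = 1)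
    (hv : Measurable fun g ↦ ρ g v) (γ : Measure E) [SFinite γ]
    (hγ : ∀ g, MeasurePreserving (ρ g) γ γ) (hγ₀ : γ {0} = 0) :
    γ {x | s * ‖x‖ ^ 2 < ‖inner 𝕜 x v‖ ^ 2} =
      μ {g | s < ‖inner 𝕜 a (ρ g v)‖ ^ 2} * γ Set.univ := by
  let S : Set (G × E) := {p | s * ‖p.2‖ ^ 2 < ‖inner 𝕜 p.2 (ρ p.1 v)‖ ^ 2}
  have hS : MeasurableSet S :=
    measurableSet_lt (by fun_prop)
      ((measurable_snd.inner (hv.comp measurable_fst)).norm.pow_const 2)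
  have hslice_left (g : G) :
      γ {x | s * ‖x‖ ^ 2 < ‖inner 𝕜 x (ρ g v)‖ ^ 2} =
        γ {x | s * ‖x‖ ^ 2 < ‖inner 𝕜 x v‖ ^ 2} := by
    rw [← (hγ g).measure_preimage]
    · simp
    · exact (measurableSet_lt (by fun_prop) (by fun_prop)).nullMeasurableSet
  have hslice_right : ∀ᵐ x ∂γ, μ {g | s * ‖x‖ ^ 2 < ‖inner 𝕜 x (ρ g v)‖ ^ 2} =
      μ {g | s < ‖inner 𝕜 a (ρ g v)‖ ^ 2} := by
    filter_upwards [compl_mem_ae_iff.2 hγ₀] with x hx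
    exact measure_mul_norm_sq_lt_norm_inner_sq μ hρ ha hx
  calc γ {x | s * ‖x‖ ^ 2 < ‖inner 𝕜 x v‖ ^ 2}
      = ∫⁻ g, γ {x | s * ‖x‖ ^ 2 < ‖inner 𝕜 x (ρ g v)‖ ^ 2} ∂μ := by simp [hslice_left]
    _ = μ.prod γ S := (Measure.prod_apply hS).symm
    _ = ∫⁻ x, μ {g | s * ‖x‖ ^ 2 < ‖inner 𝕜 x (ρ g v)‖ ^ 2} ∂γ := Measure.prod_apply_symm hS
    _ = μ {g | s < ‖inner 𝕜 a (ρ g v)‖ ^ 2} * γ Set.univ := by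
      rw [lintegral_congr_ae hslice_right, lintegral_const]

end IsometricAction

section ComplexIsometricAction

variable {G E : Type*} [Group G] [MeasurableSpace G] [MeasurableMul G]
  [NormedAddCommGroup E] [InnerProductSpace ℂ E] [FiniteDimensional ℂ E]
  {ρ : G →* (E ≃ₗᵢ[ℂ] E)} {a v : E} {s : ℝ}
  (μ : Measure G) [μ.IsMulLeftInvariant] [IsProbabilityMeasure μ]

attribute [local instance] InnerProductSpace.complexToReal FiniteDimensional.complexToReal

variable [MeasurableSpace E] [BorelSpace E]

lemma measure_lt_norm_inner_sq (hρ : IsTransitiveOnUnitSphere ρ)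
    (ha : ‖a‖ = 1) (hv : ‖v‖ = 1) (hρv : Measurable fun g ↦ ρ g v) (hs₀ : 0 ≤ s) (hs₁ : s < 1) :
    μ {g | s < ‖inner ℂ a (ρ g v)‖ ^ 2} = ENNReal.ofReal ((1 - s) ^ (finrank ℂ E - 1)) := by
  have : Nontrivial E := ⟨v, 0, norm_ne_zero_iff.1 (by simp [hv])⟩
  have : ProperSpace E := FiniteDimensional.proper ℂ E
  have hγ (g : G) : MeasurePreserving (ρ g) (gaussianWeight E) (gaussianWeight E) :=
    measurePreserving_gaussianWeight (V := E) (W := E)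
      ⟨(ρ g).toLinearEquiv.restrictScalars ℝ, (ρ g).norm_map⟩
  have htail := measure_mul_norm_sq_lt_norm_inner_sq_eq_mul μ hρ (s := s) ha hρv
    (gaussianWeight E) hγ (gaussianWeight_singleton 0)
  rw [gaussianWeight_mul_norm_sq_lt_norm_inner_sq hv hs₀ hs₁] at htail
  refine ((ENNReal.mul_left_inj ?_ (measure_ne_top _ _)).1 htail).symm
  rw [gaussianWeight_univ]
  positivity

lemma measure_norm_inner_sq_le (hE : 2 ≤ finrank ℂ E)
    (hρ : IsTransitiveOnUnitSphere ρ)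
    (ha : ‖a‖ = 1) (hv : ‖v‖ = 1) (hρv : Measurable fun g ↦ ρ g v) (hs₀ : 0 ≤ s) (hs₁ : s ≤ 1) :
    μ {g | ‖inner ℂ a (ρ g v)‖ ^ 2 ≤ s} = ENNReal.ofReal (1 - (1 - s) ^ (finrank ℂ E - 1)) := by
  have : ProperSpace E := FiniteDimensional.proper ℂ E
  rcases hs₁.lt_or_eq with hs₁ | rfl
  · have hmeas : MeasurableSet {g | s < ‖inner ℂ a (ρ g v)‖ ^ 2} :=
      measurableSet_lt (by fun_prop) (by fun_prop)
    have hcompl : {g | ‖inner ℂ a (ρ g v)‖ ^ 2 ≤ s} = {g | s < ‖inner ℂ a (ρ g v)‖ ^ 2}ᶜ := by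
      ext; simp
    rw [hcompl, prob_compl_eq_one_sub hmeas, measure_lt_norm_inner_sq μ hρ ha hv hρv hs₀ hs₁,
      ← ENNReal.ofReal_one, ENNReal.ofReal_sub _ (by bound)]
  · have huniv : {g | ‖inner ℂ a (ρ g v)‖ ^ 2 ≤ 1} = Set.univ := by
      refine Set.eq_univ_of_forall fun g ↦ pow_le_one₀ (norm_nonneg _) ?_
      simpa [ha, hv] using norm_inner_le_norm (𝕜 := ℂ) a (ρ g v)
    rw [huniv, measure_univ, sub_self, zero_pow (by lia), sub_zero, ENNReal.ofReal_one]

end ComplexIsometricAction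

section UnitaryGroup

variable {𝕜 : Type*} [RCLike 𝕜]

lemma exists_linearIsometryEquiv_apply_eq {E : Type*} [NormedAddCommGroup E]
    [InnerProductSpace 𝕜 E] [FiniteDimensional 𝕜 E] {u w : E} (hu : ‖u‖ = 1) (hw : ‖w‖ = 1) :
    ∃ e : E ≃ₗᵢ[𝕜] E, e u = w := by
  let u' : 𝕜 ∙ u := ⟨u, Submodule.mem_span_singleton_self u⟩
  let toLine : 𝕜 ≃ₗᵢ[𝕜] 𝕜 ∙ u := LinearIsometryEquiv.toSpanUnitSingleton u hu
  let f : (𝕜 ∙ u) →ₗᵢ[𝕜] E :=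
    (LinearIsometry.toSpanSingleton 𝕜 E hw).comp toLine.symm.toLinearIsometry
  have hu' : toLine.symm u' = 1 := by
    rw [LinearIsometryEquiv.symm_apply_eq]
    ext
    simp [toLine, u']
  refine ⟨f.extend.toLinearIsometryEquiv rfl, ?_⟩
  calc f.extend u = f u' := f.extend_apply u'
    _ = w := by simp [f, hu']

variable {n : Type*} [Fintype n] [DecidableEq n]

/-- The unitary matrices as the linear isometries of Euclidean space. -/
def unitaryGroupMulEquivLinearIsometryEquiv :
    unitaryGroup n 𝕜 ≃* (EuclideanSpace 𝕜 n ≃ₗᵢ[𝕜] EuclideanSpace 𝕜 n) :=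
  (Unitary.mapEquiv (StarMulEquiv.ofClass (toEuclideanCLM (n := n) (𝕜 := 𝕜)))).toMulEquiv.trans
    Unitary.linearIsometryEquiv

lemma unitaryGroupMulEquivLinearIsometryEquiv_apply (U : unitaryGroup n 𝕜)
    (x : EuclideanSpace 𝕜 n) :
    unitaryGroupMulEquivLinearIsometryEquiv U x = WithLp.toLp 2 ((U : Matrix n n 𝕜) *ᵥ x) :=
  rfl

lemma norm_toLp_unitaryGroup_mulVec (U : unitaryGroup n 𝕜) (x : n → 𝕜) :
    ‖WithLp.toLp 2 ((U : Matrix n n 𝕜) *ᵥ x)‖ = ‖WithLp.toLp 2 x‖ :=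
  (unitaryGroupMulEquivLinearIsometryEquiv U).norm_map (WithLp.toLp 2 x)

lemma norm_toLp_unitaryGroup_transpose_mulVec_star (U : unitaryGroup n 𝕜) (x : n → 𝕜) :
    ‖WithLp.toLp 2 ((U : Matrix n n 𝕜)ᵀ *ᵥ star x)‖ = ‖WithLp.toLp 2 x‖ := by
  rw [norm_toLp_unitaryGroup_mulVec ⟨_, transpose_mem_unitaryGroup_iff.2 U.2⟩]
  simp [EuclideanSpace.norm_eq]

lemma isTransitiveOnUnitSphere_unitaryGroup :
    IsTransitiveOnUnitSphere
      (unitaryGroupMulEquivLinearIsometryEquiv (n := n) (𝕜 := 𝕜)).toMonoidHom := by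
  intro u w hu hw
  obtain ⟨e, he⟩ := exists_linearIsometryEquiv_apply_eq (𝕜 := 𝕜) hu hw
  exact ⟨unitaryGroupMulEquivLinearIsometryEquiv.symm e, by simpa using he⟩

lemma measure_unitaryGroup_norm_inner_sq_le [Nontrivial n] (μ : Measure (unitaryGroup n ℂ))
    [IsProbabilityMeasure μ] [μ.IsMulLeftInvariant] {a v : n → ℂ} (ha : ‖WithLp.toLp 2 a‖ = 1)
    (hv : ‖WithLp.toLp 2 v‖ = 1) {s : ℝ} (hs₀ : 0 ≤ s) (hs₁ : s ≤ 1) :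
    μ {U | ‖star a ⬝ᵥ ((U : Matrix n n ℂ) *ᵥ v)‖ ^ 2 ≤ s} =
      ENNReal.ofReal (1 - (1 - s) ^ (Fintype.card n - 1)) := by
  have hdim : 2 ≤ finrank ℂ (EuclideanSpace ℂ n) := by
    rw [finrank_euclideanSpace]
    exact Fintype.one_lt_card
  have hmeas : Measurable fun U : unitaryGroup n ℂ ↦
      unitaryGroupMulEquivLinearIsometryEquiv.toMonoidHom U (WithLp.toLp 2 v) := by
    have : Continuous fun U : unitaryGroup n ℂ ↦ WithLp.toLp 2 ((U : Matrix n n ℂ) *ᵥ v) := by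
      fun_prop
    exact this.measurable
  have hlaw := measure_norm_inner_sq_le μ hdim isTransitiveOnUnitSphere_unitaryGroup ha hv
    hmeas hs₀ hs₁
  rw [finrank_euclideanSpace] at hlaw
  simpa only [MulEquiv.toMonoidHom_eq_coe, MonoidHom.coe_coe,
    unitaryGroupMulEquivLinearIsometryEquiv_apply, EuclideanSpace.inner_toLp_toLp,
    dotProduct_comm] using hlaw

end UnitaryGroup

section Density

variable {F f : ℝ → ℝ} {α β : ℝ}

lemma setLIntegral_Icc_ofReal_of_hasDerivAt (hαβ : α ≤ β) (hF : ContinuousOn F (Set.Icc α β))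
    (hFf : ∀ x ∈ Set.Ioo α β, HasDerivAt F (f x) x) (hf : ∀ x ∈ Set.Ioo α β, 0 ≤ f x) :
    ∫⁻ x in Set.Icc α β, ENNReal.ofReal (f x) = ENNReal.ofReal (F β - F α) := by
  have hint : IntegrableOn f (Set.Ioc α β) :=
    intervalIntegral.integrableOn_deriv_of_nonneg hF hFf hf
  have hf_ae : ∀ᵐ x ∂volume.restrict (Set.Ioo α β), 0 ≤ f x :=
    ae_restrict_of_forall_mem measurableSet_Ioo hf
  rw [← intervalIntegral.integral_eq_sub_of_hasDerivAt_of_le hαβ hF hFf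
      ((intervalIntegrable_iff_integrableOn_Ioc_of_le hαβ).2 hint),
    intervalIntegral.integral_of_le hαβ, integral_Ioc_eq_integral_Ioo,
    ofReal_integral_eq_lintegral_ofReal (hint.mono_set Set.Ioo_subset_Ioc_self) hf_ae,
    setLIntegral_congr Ioo_ae_eq_Icc]

lemma eq_withDensity_of_measure_Iic_eq (P : Measure ℝ) [IsProbabilityMeasure P] (hαβ : α ≤ β)
    (hF : ContinuousOn F (Set.Icc α β)) (hFf : ∀ x ∈ Set.Ioo α β, HasDerivAt F (f x) x)
    (hf : ∀ x ∈ Set.Ioo α β, 0 ≤ f x) (hα : F α = 0) (hβ : F β = 1)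
    (hP : ∀ t ∈ Set.Icc α β, P (Set.Iic t) = ENNReal.ofReal (F t)) :
    P = volume.withDensity ((Set.Icc α β).indicator fun x ↦ ENNReal.ofReal (f x)) := by
  refine Measure.ext_of_Iic _ _ fun t ↦ ?_
  rw [withDensity_apply _ measurableSet_Iic, setLIntegral_indicator measurableSet_Icc,
    ← Set.Ici_inter_Iic, Set.inter_assoc, Set.Iic_inter_Iic,
    Set.Ici_inter_Iic]
  rcases lt_or_ge t α with ht | ht
  · rw [Set.Icc_eq_empty (by simp [ht]), setLIntegral_empty, ← nonpos_iff_eq_zero]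
    calc P (Set.Iic t) ≤ P (Set.Iic α) := measure_mono (Set.Iic_subset_Iic.2 ht.le)
      _ = 0 := by rw [hP α (Set.left_mem_Icc.2 hαβ), hα, ENNReal.ofReal_zero]
  · have hm : β ⊓ t ∈ Set.Icc α β := ⟨le_inf hαβ ht, inf_le_left⟩
    have hIoo : Set.Ioo α (β ⊓ t) ⊆ Set.Ioo α β := Set.Ioo_subset_Ioo_right hm.2
    rw [setLIntegral_Icc_ofReal_of_hasDerivAt hm.1 (hF.mono (Set.Icc_subset_Icc_right hm.2))
      (fun x hx ↦ hFf x (hIoo hx)) (fun x hx ↦ hf x (hIoo hx)), hα, sub_zero, ← hP _ hm]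
    rcases le_total t β with htβ | htβ
    · rw [inf_eq_right.2 htβ]
    · have hone : P (Set.Iic β) = 1 := by
        rw [hP β (Set.right_mem_Icc.2 hαβ), hβ, ENNReal.ofReal_one]
      rw [inf_eq_left.2 htβ, hone]
      exact one_le_prob_iff.1 (hone.ge.trans (measure_mono (Set.Iic_subset_Iic.2 htβ)))

lemma hasDerivAt_one_sub_one_sub_mul_pow (c : ℝ) (n : ℕ) (t : ℝ) :
    HasDerivAt (fun t ↦ 1 - (1 - c * t) ^ n) (c * n * (1 - c * t) ^ (n - 1)) t := by
  have hlin : HasDerivAt (fun t ↦ 1 - c * t) (-c) t := by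
    simpa using ((hasDerivAt_id t).const_mul c).const_sub 1
  refine ((hlin.fun_pow n).const_sub 1).congr_deriv ?_
  ring

lemma eq_withDensity_of_measure_Iic_eq_one_sub_pow (P : Measure ℝ) [IsProbabilityMeasure P]
    {c : ℝ} (hc : 0 < c) {n : ℕ} (hn : n ≠ 0)
    (hP : ∀ t ∈ Set.Icc 0 (1 / c), P (Set.Iic t) = ENNReal.ofReal (1 - (1 - c * t) ^ n)) :
    P = volume.withDensity ((Set.Icc 0 (1 / c)).indicator fun x ↦
      ENNReal.ofReal (c * n * (1 - c * x) ^ (n - 1))) := by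
  have hderiv := hasDerivAt_one_sub_one_sub_mul_pow c n
  have hnonneg (x : ℝ) (hx : x ∈ Set.Ioo 0 (1 / c)) : 0 ≤ c * n * (1 - c * x) ^ (n - 1) := by
    have : 0 < 1 - c * x := sub_pos.2 ((lt_div_iff₀' hc).1 hx.2)
    positivity
  exact eq_withDensity_of_measure_Iic_eq P (by positivity)
    (fun x _ ↦ (hderiv x).continuousAt.continuousWithinAt) (fun x _ ↦ hderiv x) hnonneg
    (by simp) (by simp [hc.ne', hn]) hP

end Density

section Fidelity

variable {d : ℕ}

/-- The fidelity `|⟨a ⊗ b, (U ⊗ V)Φ⟩|²` as a function of the pair `(U, V)` of local unitaries. -/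
def maxEntFidelity (a b : Fin d → ℂ)
    (UV : unitaryGroup (Fin d) ℂ × unitaryGroup (Fin d) ℂ) : ℝ :=
  ‖bipInner (fun p ↦ a p.1 * b p.2) (kronAct UV.1 UV.2 (maxEnt d))‖ ^ 2

lemma bipInner_tensor_kronAct_maxEnt (a b : Fin d → ℂ) (U V : Matrix (Fin d) (Fin d) ℂ) :
    bipInner (fun p ↦ a p.1 * b p.2) (kronAct U V (maxEnt d)) =
      (1 / √d : ℝ) * (star a ⬝ᵥ (U *ᵥ (Vᵀ *ᵥ star b))) := by
  simp only [bipInner, kronAct, maxEnt, Fintype.sum_prod_type, dotProduct, mulVec, mul_ite,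
    mul_zero, sum_ite_eq, mem_univ, if_true, mul_sum, Pi.star_apply, transpose_apply]
  refine sum_congr rfl fun i _ ↦ ?_
  rw [sum_comm]
  refine sum_congr rfl fun j _ ↦ sum_congr rfl fun k _ ↦ ?_
  simp only [map_mul, one_div, Complex.ofReal_inv, RCLike.star_def]
  ring

lemma maxEntFidelity_eq (a b : Fin d → ℂ)
    (UV : unitaryGroup (Fin d) ℂ × unitaryGroup (Fin d) ℂ) :
    maxEntFidelity a b UV =
      1 / d * ‖star a ⬝ᵥ ((UV.1 : Matrix (Fin d) (Fin d) ℂ) *ᵥ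
        ((UV.2 : Matrix (Fin d) (Fin d) ℂ)ᵀ *ᵥ star b))‖ ^ 2 := by
  rw [maxEntFidelity, bipInner_tensor_kronAct_maxEnt, norm_mul, mul_pow, Complex.norm_real,
    norm_eq_abs, sq_abs, div_pow, sq_sqrt d.cast_nonneg, one_pow]

lemma measurable_maxEntFidelity (a b : Fin d → ℂ) : Measurable (maxEntFidelity a b) := by
  have hentry (i j : Fin d) :
      Measurable fun U : unitaryGroup (Fin d) ℂ ↦ (U : Matrix (Fin d) (Fin d) ℂ) i j :=
    (continuous_subtype_val.matrix_elem i j).measurable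
  unfold maxEntFidelity bipInner kronAct
  refine (Finset.measurable_sum _ fun p _ ↦ measurable_const.mul ?_).norm.pow_const 2
  refine Finset.measurable_sum _ fun q _ ↦ Measurable.mul_const ?_ _
  exact ((hentry _ _).comp measurable_fst).mul ((hentry _ _).comp measurable_snd)

variable {a b : Fin d → ℂ} (μ ν : Measure (unitaryGroup (Fin d) ℂ)) [IsProbabilityMeasure μ]
  [μ.IsMulLeftInvariant] [IsProbabilityMeasure ν] {t : ℝ}

lemma measure_maxEntFidelity_le (hd : 2 ≤ d) (ha : ‖WithLp.toLp 2 a‖ = 1)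
    (hb : ‖WithLp.toLp 2 b‖ = 1) (ht₀ : 0 ≤ t) (ht₁ : d * t ≤ 1)
    (V : unitaryGroup (Fin d) ℂ) :
    μ {U | maxEntFidelity a b (U, V) ≤ t} = ENNReal.ofReal (1 - (1 - d * t) ^ (d - 1)) := by
  have : Nontrivial (Fin d) := Fin.nontrivial_iff_two_le.2 hd
  have hlaw := measure_unitaryGroup_norm_inner_sq_le μ ha
    ((norm_toLp_unitaryGroup_transpose_mulVec_star V b).trans hb) (by positivity) ht₁
  simpa only [maxEntFidelity_eq, one_div, inv_mul_le_iff₀ (by positivity : (0 : ℝ) < d),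
    Fintype.card_fin] using hlaw

lemma prod_measure_maxEntFidelity_le (hd : 2 ≤ d) (ha : ‖WithLp.toLp 2 a‖ = 1)
    (hb : ‖WithLp.toLp 2 b‖ = 1) (ht₀ : 0 ≤ t) (ht₁ : d * t ≤ 1) :
    μ.prod ν {UV | maxEntFidelity a b UV ≤ t} =
      ENNReal.ofReal (1 - (1 - d * t) ^ (d - 1)) := by
  rw [Measure.prod_apply_symm
    (measurableSet_le (measurable_maxEntFidelity a b) measurable_const)]
  simp [measure_maxEntFidelity_le μ hd ha hb ht₀ ht₁]

theorem fidelity_distribution_maxEnt_vs_product_general (hd : 2 ≤ d)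
    (ha : ∑ i, ‖a i‖ ^ 2 = 1) (hb : ∑ i, ‖b i‖ ^ 2 = 1) :
    (∀ t ∈ Set.Icc (0 : ℝ) (1 / d), μ.prod ν {UV | maxEntFidelity a b UV ≤ t} =
      ENNReal.ofReal (1 - (1 - d * t) ^ (d - 1))) ∧
    (μ.prod ν).map (maxEntFidelity a b) = volume.withDensity fun f : ℝ ↦ ENNReal.ofReal
      (if 0 ≤ f ∧ f ≤ 1 / (d : ℝ) then d * (d - 1) * (1 - d * f) ^ (d - 2) else 0) := by
  have hd₀ : (0 : ℝ) < d := by positivity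
  have hcdf (t : ℝ) (ht : t ∈ Set.Icc (0 : ℝ) (1 / d)) :
      μ.prod ν {UV | maxEntFidelity a b UV ≤ t} = ENNReal.ofReal (1 - (1 - d * t) ^ (d - 1)) :=
    prod_measure_maxEntFidelity_le μ ν hd (by simp [EuclideanSpace.norm_eq, ha])
      (by simp [EuclideanSpace.norm_eq, hb]) ht.1 ((le_div_iff₀' hd₀).1 ht.2)
  have hmeas := measurable_maxEntFidelity a b
  have : IsProbabilityMeasure ((μ.prod ν).map (maxEntFidelity a b)) :=
    Measure.isProbabilityMeasure_map hmeas.aemeasurable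
  refine ⟨hcdf, ?_⟩
  rw [eq_withDensity_of_measure_Iic_eq_one_sub_pow _ hd₀ (by lia : d - 1 ≠ 0) fun t ht ↦
    (Measure.map_apply hmeas measurableSet_Iic).trans (hcdf t ht)]
  congr 1 with f
  rw [Set.indicator_apply, apply_ite ENNReal.ofReal, ENNReal.ofReal_zero,
    Nat.cast_pred (by lia), Nat.sub_sub]
  rfl

end Fidelity

/-- For `d ≥ 2`, unit vectors `a, b` in `ℂ^d`, and independent
Haar-distributed `(U_a, U_b)`, the fidelity `|⟨a ⊗ b, (U_a ⊗ U_b)Φ⟩|²` of a locally rotated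
maximally entangled state with a fixed product state has CDF `t ↦ 1 - (1 - d t)^(d-1)` on
`[0, 1/d]`; equivalently, its distribution has density `f ↦ d(d-1)(1-df)^(d-2)` on `[0,1/d]`
and `0` on `(1/d, 1]` with respect to Lebesgue measure. -/
theorem fidelity_distribution_maxEnt_vs_product (d : ℕ) (hd : 2 ≤ d)
    (a b : Fin d → ℂ) (ha : ∑ i : Fin d, ‖a i‖ ^ 2 = 1) (hb : ∑ i : Fin d, ‖b i‖ ^ 2 = 1)
    (μ : Measure (Matrix.unitaryGroup (Fin d) ℂ))
    [IsProbabilityMeasure μ] [μ.IsHaarMeasure] :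
    (∀ t ∈ Set.Icc (0 : ℝ) (1 / d),
      (μ.prod μ) {UV : Matrix.unitaryGroup (Fin d) ℂ × Matrix.unitaryGroup (Fin d) ℂ |
          ‖bipInner (fun p : Fin d × Fin d => a p.1 * b p.2)
            (kronAct (UV.1 : Matrix (Fin d) (Fin d) ℂ) (UV.2 : Matrix (Fin d) (Fin d) ℂ)
              (maxEnt d))‖ ^ 2 ≤ t}
        = ENNReal.ofReal (1 - (1 - d * t) ^ (d - 1))) ∧
    Measure.map (fun UV : Matrix.unitaryGroup (Fin d) ℂ × Matrix.unitaryGroup (Fin d) ℂ =>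
        ‖bipInner (fun p : Fin d × Fin d => a p.1 * b p.2)
          (kronAct (UV.1 : Matrix (Fin d) (Fin d) ℂ) (UV.2 : Matrix (Fin d) (Fin d) ℂ)
            (maxEnt d))‖ ^ 2) (μ.prod μ)
      = volume.withDensity (fun f : ℝ =>
          ENNReal.ofReal
            (if 0 ≤ f ∧ f ≤ 1 / (d : ℝ) then
              (d : ℝ) * ((d : ℝ) - 1) * (1 - (d : ℝ) * f) ^ (d - 2)
            else 0)) :=
  fidelity_distribution_maxEnt_vs_product_general μ μ hd ha hb
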